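/- Let n ≥ 2, let H : ℝ^{n+1} → ℝ be a smooth function of the coordinates (v, u, x², …, xⁿ) that is independent of v, and let g be the pp-wave metric in Brinkmann coordinates: g_{vv} = 0, g_{vu} = g_{uv} = 1, g_{uu} = H, g_{ii} = 1 for 2 ≤ i ≤ n, all other entries zero. Then the components (∇_m Rm)_{ijkl} of the coordinate covariant derivative of the curvature 4-tensor vanish for all m ∈ {v, 2, …, n} (i.e. ∇_X Rm = 0 for every coordinate direction X orthogonal to ∂_v other than ∂_u) if and only if ∂_i∂_j∂_k H = 0 for all 2 ≤ i, j, k ≤ n, i.e. if and only if H is a polynomial of degree at most 2 in the variables x², …, xⁿ (with u-dependent coefficients). Moreover, when H is such a quadratic polynomial, (∇_{∂_u} Rm)(∂_i, ∂_u, ∂_u, ∂_j) = −(1/2) ∂_u∂_i∂_j H for 2 ≤ i,j ≤ n, and every component of ∇Rm not obtained from these by the symmetries of Rm vanishes; in particular g is locally symmetric (∇Rm = 0) if and only if in addition all ∂_u∂_i∂_j H = 0. -/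

import Mathlib

/-!
Write `e = du` and `o = dv` for the coordinate covectors (`ind 1`, `ind 0`) and let `σ` swap the
indices `v` and `u`. The metric is `g_{ij} = [j = σ i] + H e_i e_j`, its inverse is
`[j = σ i] - H o_i o_j`, and since `∂_v H = 0` one finds

* `2 Γ^k_{ij} = o_k (e_j ∂_i H + e_i ∂_j H) - e_i e_j ∂_{σ k} H`,
* `2 Rm_{ijkl} = e_l (e_j ∂_i∂_k H - e_i ∂_j∂_k H) + e_k (e_i ∂_j∂_l H - e_j ∂_i∂_l H)`.

The covector `e` is parallel (`Γ^u_{ij} = 0`), so in `∇Rm` the Christoffel symbols act on the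
Hessian of `H` only, where they contribute multiples of `e_m e_i`; these cancel in the
antisymmetrized product with `e ⊗ e`. Hence `∇_m Rm` is the same expression as `Rm` with `∂_m`
applied to the second derivatives of `H` (`covD_eq`), and all the claims are read off from this
formula by distinguishing the index cases `v`, `u` and `≥ 2`. In the sums of products `Γ Γ` and
`Γ Rm` the cancellation takes place separately for each value of the contracted index.
-/

open Matrix

/-- Partial derivative of a function on `ℝ^m` in the `i`-th coordinate direction. -/
noncomputable def pd {m : ℕ} (i : Fin m) (f : (Fin m → ℝ) → ℝ) (x : Fin m → ℝ) : ℝ :=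
  fderiv ℝ f x (Pi.single i 1)

/-- Christoffel symbols `Γ^k_{ij}` of a metric given in coordinates. -/
noncomputable def Chr {m : ℕ} (g : (Fin m → ℝ) → Matrix (Fin m) (Fin m) ℝ)
    (k i j : Fin m) (x : Fin m → ℝ) : ℝ :=
  (1/2) * ∑ l, (g x)⁻¹ k l *
    (pd i (fun y => g y j l) x + pd j (fun y => g y i l) x - pd l (fun y => g y i j) x)

/-- Coordinate curvature `R_{ijk}{}^l`. -/
noncomputable def RiemUp {m : ℕ} (g : (Fin m → ℝ) → Matrix (Fin m) (Fin m) ℝ)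
    (i j k l : Fin m) (x : Fin m → ℝ) : ℝ :=
  pd i (Chr g l j k) x - pd j (Chr g l i k) x
  + ∑ p, (Chr g l i p x * Chr g p j k x - Chr g l j p x * Chr g p i k x)

/-- Coordinate curvature 4-tensor `Rm_{ijkl} = Σ_m g_{lm} R_{ijk}{}^m`. -/
noncomputable def Rm4 {m : ℕ} (g : (Fin m → ℝ) → Matrix (Fin m) (Fin m) ℝ)
    (i j k l : Fin m) (x : Fin m → ℝ) : ℝ :=
  ∑ p, g x l p * RiemUp g i j k p x

/-- Coordinate covariant derivative `(∇_m Rm)_{ijkl}` of the curvature 4-tensor. -/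
noncomputable def CovDRm {m : ℕ} (g : (Fin m → ℝ) → Matrix (Fin m) (Fin m) ℝ)
    (mm i j k l : Fin m) (x : Fin m → ℝ) : ℝ :=
  pd mm (Rm4 g i j k l) x - ∑ p,
    (Chr g p mm i x * Rm4 g p j k l x + Chr g p mm j x * Rm4 g i p k l x
      + Chr g p mm k x * Rm4 g i j p l x + Chr g p mm l x * Rm4 g i j k p x)

/-! ### Calculus of partial derivatives -/

theorem pd_contDiff {m : ℕ} (i : Fin m) {f : (Fin m → ℝ) → ℝ} (hf : ContDiff ℝ (⊤ : ℕ∞) f) :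
    ContDiff ℝ (⊤ : ℕ∞) (pd i f) := by
  have h : ContDiff ℝ (⊤ : ℕ∞) (fderiv ℝ f) := hf.fderiv_right (by simp)
  exact h.clm_apply contDiff_const

theorem pd_comm {m : ℕ} (i j : Fin m) {f : (Fin m → ℝ) → ℝ} (hf : ContDiff ℝ (⊤ : ℕ∞) f) :
    pd i (pd j f) = pd j (pd i f) := by
  have h : Differentiable ℝ (fderiv ℝ f) :=
    (hf.fderiv_right (m := (⊤ : ℕ∞)) (by simp)).differentiable (by simp)
  have key : ∀ (a b : Fin m) x,
      pd a (pd b f) x = fderiv ℝ (fderiv ℝ f) x (Pi.single a 1) (Pi.single b 1) := by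
    intro a b x
    have h1 : HasFDerivAt (pd b f) ((fderiv ℝ (fderiv ℝ f) x).flip (Pi.single b 1)) x := by
      have := (h x).hasFDerivAt.clm_apply (hasFDerivAt_const (Pi.single b (1 : ℝ) : Fin m → ℝ) x)
      rwa [ContinuousLinearMap.comp_zero, zero_add] at this
    simp only [pd] at h1 ⊢
    rw [h1.fderiv]
    rfl
  funext x
  rw [key, key]
  have hs : IsSymmSndFDerivAt ℝ f x :=
    hf.contDiffAt.isSymmSndFDerivAt (by
      rw [minSmoothness_of_isRCLikeNormedField]
      exact WithTop.coe_le_coe.2 le_top)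
  exact hs _ _

theorem pd_const {m : ℕ} (i : Fin m) (c : ℝ) (x : Fin m → ℝ) : pd i (fun _ => c) x = 0 := by
  simp [pd]

theorem pd_lin {m : ℕ} (i : Fin m) (a b c d : ℝ) {p q r s : (Fin m → ℝ) → ℝ}
    (hp : Differentiable ℝ p) (hq : Differentiable ℝ q) (hr : Differentiable ℝ r)
    (hs : Differentiable ℝ s) (x : Fin m → ℝ) :
    pd i (fun y => a * p y + b * q y + c * r y + d * s y) x
      = a * pd i p x + b * pd i q x + c * pd i r x + d * pd i s x := by
  have h := ((((hp x).hasFDerivAt.const_mul a).add ((hq x).hasFDerivAt.const_mul b)).add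
    ((hr x).hasFDerivAt.const_mul c)).add ((hs x).hasFDerivAt.const_mul d)
  have h2 : HasFDerivAt (fun y => a * p y + b * q y + c * r y + d * s y) _ x := h
  simp only [pd]
  rw [h2.fderiv]
  simp

theorem pd_zero_of_update {m : ℕ} (i : Fin m) {f : (Fin m → ℝ) → ℝ} (hf : Differentiable ℝ f)
    (h : ∀ (x : Fin m → ℝ) (c : ℝ), f (Function.update x i c) = f x) : pd i f = fun _ => 0 := by
  funext x
  have h1 := (hf (Function.update x i (x i))).hasFDerivAt.comp_hasDerivAt (x i)
    (hasDerivAt_update x i (x i))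
  have h2 : HasDerivAt (f ∘ Function.update x i) 0 (x i) := by
    have : f ∘ Function.update x i = fun _ => f x := funext fun c => h x c
    rw [this]
    exact hasDerivAt_const _ _
  rw [Function.update_eq_self] at h1
  exact h1.unique h2

/-! ### The pp-wave metric -/

/-- Components of the coordinate covector `dx^a`: the indicator of the index `a`. -/
noncomputable def ind {m : ℕ} (a i : Fin m) : ℝ := if i = a then 1 else 0

/-- The exchange of the indices `0 = v` and `1 = u`, through which the constant part of the
Brinkmann metric raises and lowers indices. -/
def sw {n : ℕ} : Equiv.Perm (Fin (n + 3)) := Equiv.swap 0 1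

theorem sw_zero {n : ℕ} : (sw : Equiv.Perm (Fin (n + 3))) 0 = 1 := Equiv.swap_apply_left _ _
theorem sw_one {n : ℕ} : (sw : Equiv.Perm (Fin (n + 3))) 1 = 0 := Equiv.swap_apply_right _ _
theorem sw_sw {n : ℕ} (i : Fin (n + 3)) : sw (sw i) = i := Equiv.swap_apply_self _ _ _

theorem sw_of_two_le {n : ℕ} {i : Fin (n + 3)} (h : 2 ≤ (i : ℕ)) : sw i = i := by
  apply Equiv.swap_apply_of_ne_of_ne
  · rintro rfl; simp at h
  · rintro rfl; simp at h

theorem ind_zero_mul_ind_one {n : ℕ} (p : Fin (n + 3)) : ind 0 p * ind 1 p = 0 := by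
  unfold ind
  by_cases h : p = 0 <;> simp [h]

theorem index_cases {n : ℕ} (i : Fin (n + 3)) : i = 0 ∨ i = 1 ∨ 2 ≤ (i : ℕ) := by
  rcases i with ⟨i, hi⟩
  simp only [Fin.ext_iff, Fin.val_zero, Fin.val_one]
  omega

/-- The Brinkmann metric as a constant matrix, the permutation matrix of `sw`, plus the rank-one
part `h du ⊗ du`. -/
theorem metric_eq {n : ℕ} (h : ℝ) (i j : Fin (n + 3)) :
    (if (i = 0 ∧ j = 1) ∨ (i = 1 ∧ j = 0) then 1
      else if i = 1 ∧ j = 1 then h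
      else if i = j ∧ 2 ≤ (i : ℕ) then 1
      else 0) = (if j = sw i then 1 else 0) + h * ind 1 i * ind 1 j := by
  rcases index_cases i with rfl | rfl | hi
  · rw [sw_zero]
    simp [ind]
  · rw [sw_one]
    by_cases hj : j = 1
    · simp [ind, hj]
    · simp [ind, hj, Ne.symm hj]
  · have h0 : i ≠ 0 := by rintro rfl; simp at hi
    have h1 : i ≠ 1 := by rintro rfl; simp at hi
    rw [sw_of_two_le hi]
    simp [ind, hi, h0, h1, eq_comm]

section ppwave

variable {n : ℕ} {H : (Fin (n + 3) → ℝ) → ℝ}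
  {g : (Fin (n + 3) → ℝ) → Matrix (Fin (n + 3)) (Fin (n + 3)) ℝ}

theorem inv_eq (hg : ∀ x i j, g x i j = (if j = sw i then 1 else 0) + H x * ind 1 i * ind 1 j)
    (x : Fin (n + 3) → ℝ) (i j : Fin (n + 3)) :
    (g x)⁻¹ i j = (if j = sw i then 1 else 0) - H x * ind 0 i * ind 0 j := by
  have h : g x * Matrix.of (fun i j : Fin (n + 3) =>
      (if j = sw i then (1 : ℝ) else 0) - H x * ind 0 i * ind 0 j) = 1 := by
    ext i j
    rw [Matrix.mul_apply]
    simp only [hg, Matrix.of_apply, add_mul, Finset.sum_add_distrib]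
    have h1 : ∑ p, (if p = sw i then (1 : ℝ) else 0) *
        ((if j = sw p then (1 : ℝ) else 0) - H x * ind 0 p * ind 0 j)
        = (if j = i then (1 : ℝ) else 0) - H x * ind 1 i * ind 0 j := by
      have : (ind 0 (sw i) : ℝ) = ind 1 i := by
        unfold ind
        simp only [← sw_one (n := n), sw.injective.eq_iff]
      simp [ite_mul, sw_sw, this]
    have h2 : ∑ p, H x * ind 1 i * ind 1 p *
        ((if j = sw p then (1 : ℝ) else 0) - H x * ind 0 p * ind 0 j)
        = H x * ind 1 i * ind 0 j := by
      rw [Finset.sum_eq_single 1]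
      · simp [ind, sw_one]
      · intro p _ hp
        simp [ind, hp]
      · simp
    rw [h1, h2, Matrix.one_apply]
    simp [eq_comm]
  rw [Matrix.inv_eq_right_inv h, Matrix.of_apply]

theorem pd_metric (hH : ContDiff ℝ (⊤ : ℕ∞) H)
    (hg : ∀ x i j, g x i j = (if j = sw i then 1 else 0) + H x * ind 1 i * ind 1 j)
    (k i j : Fin (n + 3)) (x : Fin (n + 3) → ℝ) :
    pd k (fun y => g y i j) x = ind 1 i * ind 1 j * pd k H x := by
  have hd : Differentiable ℝ H := hH.differentiable (by simp)
  have hc : Differentiable ℝ (fun _ : Fin (n + 3) → ℝ => (1 : ℝ)) := by fun_prop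
  have := pd_lin k (if j = sw i then 1 else 0) (ind 1 i * ind 1 j) 0 0 hc hd hc hc x
  simp only [pd_const] at this
  rw [show (fun y => g y i j) = fun y => (if j = sw i then 1 else 0) * 1 +
    ind 1 i * ind 1 j * H y + 0 * 1 + 0 * 1 from funext fun y => by rw [hg]; ring, this]
  ring

theorem chr_eq (hH : ContDiff ℝ (⊤ : ℕ∞) H) (h0 : pd 0 H = fun _ => 0)
    (hg : ∀ x i j, g x i j = (if j = sw i then 1 else 0) + H x * ind 1 i * ind 1 j)
    (k i j : Fin (n + 3)) : Chr g k i j = fun x =>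
      (ind 0 k * ind 1 j / 2) * pd i H x + (ind 0 k * ind 1 i / 2) * pd j H x
        + (-(ind 1 i * ind 1 j) / 2) * pd (sw k) H x + 0 * pd i H x := by
  funext x
  simp only [Chr, inv_eq hg, pd_metric hH hg, sub_mul, Finset.sum_sub_distrib]
  have h1 : ∑ l, (if l = sw k then (1 : ℝ) else 0) * (ind 1 j * ind 1 l * pd i H x +
      ind 1 i * ind 1 l * pd j H x - ind 1 i * ind 1 j * pd l H x) =
      ind 1 j * ind 0 k * pd i H x + ind 1 i * ind 0 k * pd j H x
        - ind 1 i * ind 1 j * pd (sw k) H x := by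
    have : (ind 1 (sw k) : ℝ) = ind 0 k := by
      unfold ind
      simp only [← sw_zero (n := n), sw.injective.eq_iff]
    simp [ite_mul, this]
  -- only `l = 0` contributes to the part `-H o_k o_l` of the inverse metric, and it gives `∂_v H`
  have h2 : ∑ l, H x * ind 0 k * ind 0 l * (ind 1 j * ind 1 l * pd i H x +
      ind 1 i * ind 1 l * pd j H x - ind 1 i * ind 1 j * pd l H x) = 0 := by
    refine Finset.sum_eq_zero fun l _ => ?_
    by_cases hl : l = 0
    · subst hl
      simp [ind, h0]
    · simp [ind, hl]
  rw [h1, h2]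
  ring

theorem ind_zero_mul_pd (h0 : pd 0 H = fun _ => 0) (p : Fin (n + 3)) (x : Fin (n + 3) → ℝ) :
    ind 0 p * pd p H x = 0 := by
  by_cases hp : p = 0
  · simp [hp, h0]
  · simp [ind, hp]

theorem ind_one_mul_pd_sw (h0 : pd 0 H = fun _ => 0) (p : Fin (n + 3)) (x : Fin (n + 3) → ℝ) :
    ind 1 p * pd (sw p) H x = 0 := by
  by_cases hp : p = 1
  · simp [hp, h0, sw_one]
  · simp [ind, hp]

theorem pd_pd_zero (h0 : pd 0 H = fun _ => 0) (i : Fin (n + 3)) :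
    pd i (pd 0 H) = fun _ => 0 := by
  funext x
  rw [h0, pd_const]

theorem pd_zero_pd (hH : ContDiff ℝ (⊤ : ℕ∞) H) (h0 : pd 0 H = fun _ => 0) (i : Fin (n + 3)) :
    pd 0 (pd i H) = fun _ => 0 := by
  rw [pd_comm _ _ hH, pd_pd_zero h0]

/-- The terms quadratic in `Γ` drop out of the curvature: `Γ^l_{ip} Γ^p_{jk}` is, for each fixed
`p`, symmetric in `i` and `j`. -/
theorem riemUp_eq (hH : ContDiff ℝ (⊤ : ℕ∞) H) (h0 : pd 0 H = fun _ => 0)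
    (hg : ∀ x i j, g x i j = (if j = sw i then 1 else 0) + H x * ind 1 i * ind 1 j)
    (i j k l : Fin (n + 3)) (x : Fin (n + 3) → ℝ) : RiemUp g i j k l x =
      (ind 0 l * (ind 1 j * pd i (pd k H) x - ind 1 i * pd j (pd k H) x)
        + ind 1 k * (ind 1 i * pd j (pd (sw l) H) x - ind 1 j * pd i (pd (sw l) H) x)) / 2 := by
  have hd : ∀ a, Differentiable ℝ (pd a H) := fun a => (pd_contDiff a hH).differentiable (by simp)
  rw [RiemUp, Finset.sum_eq_zero]
  · rw [chr_eq hH h0 hg, chr_eq hH h0 hg, pd_lin _ _ _ _ _ (hd _) (hd _) (hd _) (hd _),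
      pd_lin _ _ _ _ _ (hd _) (hd _) (hd _) (hd _), pd_comm j i hH]
    ring
  · intro p _
    simp only [chr_eq hH h0 hg]
    have e1 := ind_zero_mul_ind_one p
    have e2 := ind_zero_mul_pd h0 p x
    have e3 := ind_one_mul_pd_sw h0 p x
    have key : ∀ a b : Fin (n + 3), (ind 0 l * ind 1 p / 2 * pd a H x
        + ind 0 l * ind 1 a / 2 * pd p H x + -(ind 1 a * ind 1 p) / 2 * pd (sw l) H x
        + 0 * pd a H x) * (ind 0 p * ind 1 k / 2 * pd b H x
        + ind 0 p * ind 1 b / 2 * pd k H x + -(ind 1 b * ind 1 k) / 2 * pd (sw p) H x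
        + 0 * pd b H x) =
        -(ind 0 l * ind 1 a * ind 1 b * ind 1 k * pd p H x * pd (sw p) H x) / 4 := by
      intro a b
      linear_combination
        (ind 0 l * pd a H x / 2 - ind 1 a * pd (sw l) H x / 2) *
          (ind 1 k * pd b H x / 2 + ind 1 b * pd k H x / 2) * e1
        + (ind 0 l * ind 1 a / 2) * (ind 1 k * pd b H x / 2 + ind 1 b * pd k H x / 2) * e2
        + (ind 0 l * pd a H x / 2 - ind 1 a * pd (sw l) H x / 2) *
          (-(ind 1 b * ind 1 k) / 2) * e3
    rw [key, key]
    ring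

/-- Up to sign, the curvature tensor is half the Kulkarni–Nomizu product of `du ⊗ du` with the
coordinate Hessian of `H`. -/
theorem rm_eq (hH : ContDiff ℝ (⊤ : ℕ∞) H) (h0 : pd 0 H = fun _ => 0)
    (hg : ∀ x i j, g x i j = (if j = sw i then 1 else 0) + H x * ind 1 i * ind 1 j)
    (i j k l : Fin (n + 3)) : Rm4 g i j k l = fun x =>
      (ind 1 l * ind 1 j / 2) * pd i (pd k H) x + (-(ind 1 l * ind 1 i) / 2) * pd j (pd k H) x
        + (ind 1 k * ind 1 i / 2) * pd j (pd l H) x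
        + (-(ind 1 k * ind 1 j) / 2) * pd i (pd l H) x := by
  funext x
  simp only [Rm4, hg, add_mul, Finset.sum_add_distrib]
  have h1 : ∑ p, (if p = sw l then (1 : ℝ) else 0) * RiemUp g i j k p x
      = RiemUp g i j k (sw l) x := by
    simp [ite_mul]
  -- lowering with `H du ⊗ du` sees only `R_{ijk}{}^u`, which vanishes
  have h2 : ∑ p, H x * ind 1 l * ind 1 p * RiemUp g i j k p x = 0 := by
    refine Finset.sum_eq_zero fun p _ => ?_
    by_cases hp : p = 1
    · subst hp
      rw [riemUp_eq hH h0 hg]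
      simp [sw_one, pd_pd_zero h0, ind]
    · simp [ind, hp]
  have h3 : (ind 0 (sw l) : ℝ) = ind 1 l := by
    unfold ind
    simp only [← sw_one (n := n), sw.injective.eq_iff]
  rw [h1, h2, riemUp_eq hH h0 hg, sw_sw, h3]
  ring

/-- All Christoffel terms cancel in `∇Rm`, which is therefore obtained from `Rm` by replacing the
second derivatives of `H` with their `m`-th partial derivatives. -/
theorem covD_eq (hH : ContDiff ℝ (⊤ : ℕ∞) H) (h0 : pd 0 H = fun _ => 0)
    (hg : ∀ x i j, g x i j = (if j = sw i then 1 else 0) + H x * ind 1 i * ind 1 j)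
    (m i j k l : Fin (n + 3)) (x : Fin (n + 3) → ℝ) : CovDRm g m i j k l x =
      (ind 1 l * ind 1 j / 2) * pd m (pd i (pd k H)) x
        + (-(ind 1 l * ind 1 i) / 2) * pd m (pd j (pd k H)) x
        + (ind 1 k * ind 1 i / 2) * pd m (pd j (pd l H)) x
        + (-(ind 1 k * ind 1 j) / 2) * pd m (pd i (pd l H)) x := by
  have hd : ∀ a b, Differentiable ℝ (pd a (pd b H)) :=
    fun a b => (pd_contDiff a (pd_contDiff b hH)).differentiable (by simp)
  rw [CovDRm, Finset.sum_eq_zero]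
  · rw [rm_eq hH h0 hg, pd_lin _ _ _ _ _ (hd _ _) (hd _ _) (hd _ _) (hd _ _), sub_zero]
  · intro p _
    -- `du` is parallel
    have hΓ : ∀ a, Chr g p m a x * ind 1 p = 0 := by
      intro a
      simp only [chr_eq hH h0 hg]
      have e1 := ind_zero_mul_ind_one p
      have e3 := ind_one_mul_pd_sw h0 p x
      linear_combination (ind 1 a / 2 * pd m H x + ind 1 m / 2 * pd a H x) * e1
        - ind 1 m * ind 1 a / 2 * e3
    have hΓH : ∀ a b, Chr g p m a x * pd p (pd b H) x
        = -(ind 1 m * ind 1 a) / 2 * (pd (sw p) H x * pd p (pd b H) x) := by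
      intro a b
      simp only [chr_eq hH h0 hg]
      have e2 : ind 0 p * pd p (pd b H) x = 0 := by
        by_cases hp : p = 0
        · simp [hp, pd_zero_pd hH h0]
        · simp [ind, hp]
      linear_combination (ind 1 a / 2 * pd m H x + ind 1 m / 2 * pd a H x) * e2
    simp only [rm_eq hH h0 hg]
    rw [pd_comm j p hH, pd_comm i p hH]
    linear_combination
      (-(ind 1 l / 2) * pd j (pd k H) x + ind 1 k / 2 * pd j (pd l H) x) * hΓ i
      + (ind 1 l / 2 * pd i (pd k H) x - ind 1 k / 2 * pd i (pd l H) x) * hΓ j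
      + (ind 1 i / 2 * pd j (pd l H) x - ind 1 j / 2 * pd i (pd l H) x) * hΓ k
      + (ind 1 j / 2 * pd i (pd k H) x - ind 1 i / 2 * pd j (pd k H) x) * hΓ l
      + ind 1 l * ind 1 j / 2 * hΓH i k - ind 1 k * ind 1 j / 2 * hΓH i l
      - ind 1 l * ind 1 i / 2 * hΓH j k + ind 1 k * ind 1 i / 2 * hΓH j l
      + ind 1 l * ind 1 j / 2 * hΓH k i - ind 1 l * ind 1 i / 2 * hΓH k j
      + ind 1 k * ind 1 i / 2 * hΓH l j - ind 1 k * ind 1 j / 2 * hΓH l i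

end ppwave

/-! ### The characterization of plane waves -/

/-- For the pp-wave metric in Brinkmann coordinates `(v,u,x²,…,xⁿ)` (index `0 = v`, `1 = u`):
`∇Rm` vanishes in all coordinate directions orthogonal to `∂_v` other than `∂_u` iff all third
derivatives `∂ᵢ∂ⱼ∂ₖH` (`i,j,k ≥ 2`) vanish, i.e. iff `H` is quadratic in `x²,…,xⁿ`; and in that
case `(∇_{∂ᵤ}Rm)(∂ᵢ,∂ᵤ,∂ᵤ,∂ⱼ) = −(1/2)∂ᵤ∂ᵢ∂ⱼH`, every component of `∇Rm` not obtained from these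
by the curvature symmetries vanishes, and `g` is locally symmetric iff all `∂ᵤ∂ᵢ∂ⱼH = 0`. -/
theorem stmt_13 (n : ℕ) (hn : 2 ≤ n)
    (H : (Fin (n+1) → ℝ) → ℝ) (hH : ContDiff ℝ (⊤ : ℕ∞) H)
    (hHv : ∀ (x : Fin (n+1) → ℝ) (c : ℝ), H (Function.update x 0 c) = H x)
    (g : (Fin (n+1) → ℝ) → Matrix (Fin (n+1)) (Fin (n+1)) ℝ)
    (hg : ∀ x (i j : Fin (n+1)), g x i j =
      if (i = 0 ∧ j = 1) ∨ (i = 1 ∧ j = 0) then 1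
      else if i = 1 ∧ j = 1 then H x
      else if i = j ∧ 2 ≤ (i : ℕ) then 1
      else 0) :
    ((∀ (x : Fin (n+1) → ℝ) (m i j k l : Fin (n+1)), (m = 0 ∨ 2 ≤ (m : ℕ)) →
        CovDRm g m i j k l x = 0) ↔
      (∀ (x : Fin (n+1) → ℝ) (i j k : Fin (n+1)),
        2 ≤ (i : ℕ) → 2 ≤ (j : ℕ) → 2 ≤ (k : ℕ) → pd i (pd j (pd k H)) x = 0)) ∧
    ((∀ (x : Fin (n+1) → ℝ) (i j k : Fin (n+1)),
        2 ≤ (i : ℕ) → 2 ≤ (j : ℕ) → 2 ≤ (k : ℕ) → pd i (pd j (pd k H)) x = 0) →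
      (∀ (x : Fin (n+1) → ℝ) (i j : Fin (n+1)), 2 ≤ (i : ℕ) → 2 ≤ (j : ℕ) →
        CovDRm g 1 i 1 1 j x = -(1/2) * pd 1 (pd i (pd j H)) x) ∧
      (∀ (x : Fin (n+1) → ℝ) (m a b c d : Fin (n+1)),
        ¬ (m = 1 ∧ ((a = 1 ∧ 2 ≤ (b : ℕ)) ∨ (2 ≤ (a : ℕ) ∧ b = 1)) ∧
            ((c = 1 ∧ 2 ≤ (d : ℕ)) ∨ (2 ≤ (c : ℕ) ∧ d = 1))) →
        CovDRm g m a b c d x = 0) ∧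
      ((∀ (x : Fin (n+1) → ℝ) (m a b c d : Fin (n+1)), CovDRm g m a b c d x = 0) ↔
        (∀ (x : Fin (n+1) → ℝ) (i j : Fin (n+1)), 2 ≤ (i : ℕ) → 2 ≤ (j : ℕ) →
          pd 1 (pd i (pd j H)) x = 0))) := by
  obtain ⟨n, rfl⟩ : ∃ k, n = k + 2 := ⟨n - 2, by omega⟩
  have h0 : pd 0 H = fun _ => 0 := pd_zero_of_update 0 (hH.differentiable (by simp)) hHv
  have hg' : ∀ x i j, g x i j = (if j = sw i then 1 else 0) + H x * ind 1 i * ind 1 j :=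
    fun x i j => (hg x i j).trans (metric_eq _ _ _)
  have hC := covD_eq hH h0 hg'
  have ne1 : ∀ i : Fin (n + 3), 2 ≤ (i : ℕ) → ind 1 i = 0 := by
    intro i hi
    have : i ≠ 1 := by rintro rfl; simp at hi
    simp [ind, this]
  have ind1 : ind (1 : Fin (n + 3)) 1 = 1 := by simp [ind]
  have ind0 : ind (1 : Fin (n + 3)) 0 = 0 := by simp [ind]
  -- the essential components, for an arbitrary direction `m`
  have hess : ∀ x (m i j : Fin (n + 3)), 2 ≤ (i : ℕ) → 2 ≤ (j : ℕ) →
      CovDRm g m i 1 1 j x = -(1/2) * pd m (pd i (pd j H)) x := by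
    intro x m i j hi hj
    rw [hC, ne1 i hi, ne1 j hj, ind1]
    ring
  -- third derivatives involving `v` vanish
  have z1 : ∀ x (a b : Fin (n + 3)), pd 0 (pd a (pd b H)) x = 0 := by
    intro x a b
    rw [pd_comm 0 a (pd_contDiff b hH), pd_zero_pd hH h0, pd_const]
  have z2 : ∀ x (a b : Fin (n + 3)), pd a (pd 0 (pd b H)) x = 0 := by
    intro x a b
    rw [pd_zero_pd hH h0, pd_const]
  have z3 : ∀ x (a b : Fin (n + 3)), pd a (pd b (pd 0 H)) x = 0 := by
    intro x a b
    rw [pd_pd_zero h0, pd_const]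
  -- a direction in which the spatial Hessian of `H` is constant annihilates `Rm`
  have hvan : ∀ x (m : Fin (n + 3)),
      (∀ i j : Fin (n + 3), 2 ≤ (i : ℕ) → 2 ≤ (j : ℕ) → pd m (pd i (pd j H)) x = 0) →
      ∀ a b c d, CovDRm g m a b c d x = 0 := by
    intro x m hm a b c d
    rw [hC]
    clear hg hg' hess hC h0 hHv
    rcases index_cases a with rfl | rfl | ha <;> rcases index_cases b with rfl | rfl | hb <;>
    rcases index_cases c with rfl | rfl | hc <;> rcases index_cases d with rfl | rfl | hd <;>
    first
      | (simp [*]; done)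
      | (simp [*]; ring)
  have hplane : (∀ (x : Fin (n+3) → ℝ) (i j k : Fin (n+3)),
        2 ≤ (i : ℕ) → 2 ≤ (j : ℕ) → 2 ≤ (k : ℕ) → pd i (pd j (pd k H)) x = 0) →
      ∀ (x : Fin (n+3) → ℝ) (m i j k l : Fin (n+3)), (m = 0 ∨ 2 ≤ (m : ℕ)) →
        CovDRm g m i j k l x = 0 := by
    intro h x m i j k l hm
    refine hvan x m (fun a b ha hb => ?_) i j k l
    rcases hm with rfl | hm
    · exact z1 x a b
    · exact h x m a b hm ha hb
  refine ⟨⟨fun h x i j k hi hj hk => ?_, hplane⟩, fun h => ⟨fun x i j => hess x 1 i j, ?_, ?_, ?_⟩⟩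
  · have h1 := h x i j 1 1 k (Or.inr hi)
    rw [hess x i j k hj hk] at h1
    linarith
  · intro x m a b c d hne
    rcases index_cases m with rfl | rfl | hm
    · exact hplane h x _ a b c d (Or.inl rfl)
    · rw [hC]
      clear hg hg' hess hC h0 hHv hplane hvan h
      rcases index_cases a with rfl | rfl | ha <;> rcases index_cases b with rfl | rfl | hb <;>
      rcases index_cases c with rfl | rfl | hc <;> rcases index_cases d with rfl | rfl | hd <;>
      first
        | (exfalso; apply hne; simp [*]; done)
        | (simp [*]; done)
        | (simp [*]; ring)
    · exact hplane h x _ a b c d (Or.inr hm)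
  · intro h1 x i j hi hj
    have h2 := h1 x 1 i 1 1 j
    rw [hess x 1 i j hi hj] at h2
    linarith
  · intro h1 x m a b c d
    rcases index_cases m with rfl | rfl | hm
    · exact hplane h x _ a b c d (Or.inl rfl)
    · exact hvan x 1 (h1 x) a b c d
    · exact hplane h x _ a b c d (Or.inr hm)
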